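/- For every q = 2^h with h ≥ 4 there exists a KM-arc of type q/8 in PG(2,q), i.e. a set of q + q/8 points of PG(2,q) such that every line of PG(2,q) contains exactly 0, 2 or q/8 of them. -/

import Mathlib

open scoped Classical

noncomputable section

variable {K : Type*} [Field K]

/-- The absolute trace-style sum `x + x² + x⁴ + ⋯ + x^(2^(h-1))`
(it lands in the prime subfield `F₂` when `|K| = 2^h`). -/
def Tr (h : ℕ) (x : K) : K := ∑ i ∈ Finset.range h, x ^ 2 ^ i

/-- `F₂`-independence of a tuple of elements of a field of characteristic two:
no nontrivial combination with coefficients `0`/`1` vanishes. -/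
def F2Indep {n : ℕ} (v : Fin n → K) : Prop :=
  ∀ c : Fin n → K, (∀ i, c i = 0 ∨ c i = 1) → ∑ i, c i * v i = 0 → ∀ i, c i = 0

/-- The `F₂`-span of a tuple of elements of a field of characteristic two. -/
def F2Span {n : ℕ} (v : Fin n → K) : Set K :=
  {x | ∃ c : Fin n → K, (∀ i, c i = 0 ∨ c i = 1) ∧ x = ∑ i, c i * v i}

/-- `α·S` for an additive subgroup `S` of the field. -/
def smulSub (α : K) (S : AddSubgroup K) : AddSubgroup K :=
  S.map (AddMonoidHom.mulLeft α)

/-- Points of `PG(2,q)`: one-dimensional subspaces of `K³`. -/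
abbrev Pt (K : Type*) [Field K] := Projectivization K (Fin 3 → K)

/-- The point `(a : b : c)` of `PG(2,q)`. -/
def pt3 (a b c : K) (habc : ¬(a = 0 ∧ b = 0 ∧ c = 0)) : Pt K :=
  Projectivization.mk K ![a, b, c] (fun h0 => habc
    ⟨by simpa using congrFun h0 0, by simpa using congrFun h0 1, by simpa using congrFun h0 2⟩)

/-- The point `(a : b)` of `PG(1,q)`. -/
def pt2 (a b : K) (hab : ¬(a = 0 ∧ b = 0)) : Projectivization K (Fin 2 → K) :=
  Projectivization.mk K ![a, b] (fun h0 => hab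
    ⟨by simpa using congrFun h0 0, by simpa using congrFun h0 1⟩)

/-- An `F₂`-linear set of points of `PG(1,q)`: in characteristic two, the
`F₂`-subspaces of `K²` are exactly its additive subgroups. -/
def IsF2Linear (T : Set (Projectivization K (Fin 2 → K))) : Prop :=
  ∃ U : AddSubgroup (Fin 2 → K),
    T = {P | ∃ u : Fin 2 → K, ∃ hu : u ≠ 0, u ∈ U ∧ Projectivization.mk K u hu = P}

/-- Lines of `PG(2,q)`: two-dimensional subspaces of `K³`. -/
def IsLine (L : Submodule K (Fin 3 → K)) : Prop := Module.finrank K L = 2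

/-- Incidence of a point with a line. -/
def OnLine (P : Pt K) (L : Submodule K (Fin 3 → K)) : Prop := P.submodule ≤ L

/-- The number of points of `A` lying on the line `L`. -/
def secantCount (A : Set (Pt K)) (L : Submodule K (Fin 3 → K)) : ℕ :=
  {P ∈ A | OnLine P L}.ncard

/-- A KM-arc of type `t`: `q+t` points meeting every line in `0`, `2` or `t` points. -/
def IsKMArc (q t : ℕ) (A : Set (Pt K)) : Prop :=
  A.ncard = q + t ∧ ∀ L : Submodule K (Fin 3 → K), IsLine L →
    secantCount A L = 0 ∨ secantCount A L = 2 ∨ secantCount A L = t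

/-- The projectivity of `PG(2,q)` induced by an element of `GL(3,q)`. -/
def projMap (f : (Fin 3 → K) ≃ₗ[K] (Fin 3 → K)) : Pt K → Pt K :=
  Projectivization.map f.toLinearMap f.injective

/-- `f` induces an elation with axis `L` and centre `R`: it fixes every point of `L`
and maps every line through `R` to itself. -/
def IsElation (f : (Fin 3 → K) ≃ₗ[K] (Fin 3 → K)) (L : Submodule K (Fin 3 → K))
    (R : Pt K) : Prop :=
  IsLine L ∧ OnLine R L ∧ (∀ P : Pt K, OnLine P L → projMap f P = P) ∧
    ∀ M : Submodule K (Fin 3 → K), IsLine M → OnLine R M →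
      ∀ P : Pt K, OnLine P M → OnLine (projMap f P) M

/-- `f` induces an elation with axis `L` (for some centre on `L`). -/
def IsElationAxis (f : (Fin 3 → K) ≃ₗ[K] (Fin 3 → K)) (L : Submodule K (Fin 3 → K)) : Prop :=
  ∃ R : Pt K, IsElation f L R

/-- The projectivity induced by `f` stabilises the point set `A`. -/
def Stabilises (f : (Fin 3 → K) ≃ₗ[K] (Fin 3 → K)) (A : Set (Pt K)) : Prop :=
  projMap f '' A = A

/-- `N` lies on every `t`-secant of `A` (i.e. `N` is the `t`-nucleus). -/
def IsNucleus (t : ℕ) (A : Set (Pt K)) (N : Pt K) : Prop :=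
  ∀ L : Submodule K (Fin 3 → K), IsLine L → secantCount A L = t → OnLine N L

/-- An elation KM-arc of type `t` with `t`-nucleus `N` and elation line `linf`:
for every `t`-secant `L ≠ linf`, the group of elations with axis `linf` stabilising `A`
acts transitively on `A ∩ L`. -/
def IsElationKMArc (q t : ℕ) (A : Set (Pt K)) (N : Pt K)
    (linf : Submodule K (Fin 3 → K)) : Prop :=
  IsKMArc q t A ∧ IsLine linf ∧ OnLine N linf ∧ IsNucleus t A N ∧
    ∀ L : Submodule K (Fin 3 → K), IsLine L → secantCount A L = t → L ≠ linf →
      ∀ P ∈ A, OnLine P L → ∀ Q ∈ A, OnLine Q L →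
        ∃ f : (Fin 3 → K) ≃ₗ[K] (Fin 3 → K),
          IsElationAxis f linf ∧ Stabilises f A ∧ projMap f P = Q

/-- A translation KM-arc with translation line `l`: the group of elations with axis `l`
stabilising `A` acts transitively on `A \ l`. -/
def IsTranslationKMArc (A : Set (Pt K)) (l : Submodule K (Fin 3 → K)) : Prop :=
  IsLine l ∧ ∀ P ∈ A, ¬OnLine P l → ∀ Q ∈ A, ¬OnLine Q l →
    ∃ f : (Fin 3 → K) ≃ₗ[K] (Fin 3 → K),
      IsElationAxis f l ∧ Stabilises f A ∧ projMap f P = Q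

/-- The line `X = 0` of `PG(2,q)`. -/
def lineX0 (K : Type*) [Field K] : Submodule K (Fin 3 → K) :=
  LinearMap.ker (LinearMap.proj (R := K) (φ := fun _ : Fin 3 => K) 0)

/-- The line `Y = aX` of `PG(2,q)`. -/
def lineYaX (a : K) : Submodule K (Fin 3 → K) where
  carrier := {v | v 1 = a * v 0}
  add_mem' := by
    intro v w hv hw
    simp only [Set.mem_setOf_eq, Pi.add_apply] at hv hw ⊢
    rw [hv, hw]; ring
  zero_mem' := by simp
  smul_mem' := by
    intro c v hv
    simp only [Set.mem_setOf_eq, Pi.smul_apply, smul_eq_mul] at hv ⊢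
    rw [hv]; ring

/-- The point set of the `q/8`-construction (Theorem 4.4 of the paper), built from
`F₂`-independent `a 0, a 1, a 2` and coset representatives `b 0, b 1, b 2`. -/
def q8Arc (h : ℕ) (a b : Fin 3 → K) : Set (Pt K) :=
  {P | ∃ x : K, (∀ i, Tr h (a i ^ 2 * x) = 0) ∧ P = pt3 0 1 x (by simp)}
    ∪ {P | ∃ l : Fin 3 → K, (∀ i, l i = 0 ∨ l i = 1) ∧ ∃ s : K, (∀ i, Tr h (a i * s) = 0) ∧
        P = pt3 1 (l 0 * a 0 + l 1 * a 1 + l 2 * a 2)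
          ((l 0 + l 1 + l 2 + l 1 * l 2) * b 0 + (l 1 + l 2 + l 0 * l 2) * b 1
            + (l 2 + l 0 * l 1) * b 2 + s) (by simp)}

/-- The point set of the `q/16`-construction (Theorem 5.2 of the paper). -/
def q16Arc (h : ℕ) (a : Fin 4 → K) (α : K) (b : Fin 3 → K) : Set (Pt K) :=
  {P | ∃ x : K, Tr h (a 0 * (a 0 + a 3) * x) = 0 ∧ Tr h (a 1 * (a 1 + a 3) * x) = 0 ∧
      Tr h (a 2 * (a 2 + a 3) * x) = 0 ∧ Tr h (a 3 * α * x) = 1 ∧ P = pt3 0 1 x (by simp)}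
    ∪ {P | ∃ l : Fin 4 → K, (∀ i, l i = 0 ∨ l i = 1) ∧ ∃ s : K, (∀ i, Tr h (a i * s) = 0) ∧
        P = pt3 1 (l 0 * a 0 + l 1 * a 1 + l 2 * a 2 + l 3 * a 3)
          ((l 0 + l 1 + l 2 + l 1 * l 2) * b 0 + (l 1 + l 2 + l 0 * l 2) * b 1
            + (l 2 + l 0 * l 1) * b 2 + s) (by simp)}

/-- The semilinear collineation of `PG(2,q)` sending the point spanned by `v`
to the point spanned by `M (ψ ∘ v)`. -/
def frobMap (ψ : K ≃+* K) (M : (Fin 3 → K) ≃ₗ[K] (Fin 3 → K)) (P : Pt K) : Pt K :=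
  Projectivization.mk K (M fun i => ψ (P.rep i)) (by
    rw [LinearEquiv.map_ne_zero_iff]
    intro h0
    apply P.rep_nonzero
    funext i
    have h2 : P.rep i = 0 := ψ.injective (by rw [map_zero]; exact congrFun h0 i)
    simpa using h2)

/-!
Counting along the pencil of an affine point shows that a set of `q + t` points whose lines through
a point `N` meet it in `0` or `t` points is a KM-arc as soon as every line missing `N` meets it in
at most two points. Here `N = (0 : 0 : 1)`, and the affine points are `(1 : y : z)` with `y` a
function of the traces `Tr (a i * z)`.

On a line of slope `s ^ 2`, two affine points whose second coordinates differ by `d` have last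
coordinates differing by `s ^ 2 * d`. As the trace is invariant under squaring,
`Tr (s * d) = Tr ((s ^ 2 * d) * d)`, and the latter is a dot product over `F₂`, which the choice of
`y` makes equal to `1` for all distinct points. Now `Tr (s * d)` is additive in `d`, so three
collinear affine points would give `1 + 1 = 1`; and when `(0 : 1 : s ^ 2)` belongs to the set,
`Tr (s * d) = 0`, so the line has at most one affine point. The required function on `F₂³` is a
quadratic map whose polarization `(F x - F y) ⬝ᵥ (x - y)` is the indicator of `x ≠ y`.
-/

section ProjectivePlane

open Configuration

lemma ncard_lines_through_ne {P L : Type*} [Membership P L] [ProjectivePlane P L] [Finite P]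
    [Finite L] {p : P} {m : L} (hpm : p ∈ m) :
    {l : L | p ∈ l ∧ l ≠ m}.ncard = ProjectivePlane.order P L := by
  have hcount : {l : L | p ∈ l}.ncard = ProjectivePlane.order P L + 1 :=
    ProjectivePlane.lineCount_eq L p
  have hremove := Set.ncard_sdiff_singleton_add_one (s := {l : L | p ∈ l}) hpm
  change {l : L | p ∈ l ∧ l ≠ m}.ncard + 1 = _ at hremove
  omega

theorem ncard_eq_two_of_forall_notMem_ncard_le_two {P L : Type*} [Membership P L]
    [ProjectivePlane P L] [Finite P] [Finite L] {A : Set P} {N : P} {t : ℕ}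
    (hA : A.ncard = ProjectivePlane.order P L + t)
    (hN : ∀ l : L, N ∈ l → {p ∈ A | p ∈ l}.ncard = 0 ∨ {p ∈ A | p ∈ l}.ncard = t)
    (hle : ∀ l : L, N ∉ l → {p ∈ A | p ∈ l}.ncard ≤ 2)
    {l : L} (hl : N ∉ l) {p : P} (hpA : p ∈ A) (hpl : p ∈ l) :
    {p ∈ A | p ∈ l}.ncard = 2 := by
  have hpN : p ≠ N := fun h => hl (h ▸ hpl)
  obtain ⟨m, ⟨hpm, hNm⟩, hm⟩ := HasLines.existsUnique_line P L p N hpN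
  have hm_card : {x ∈ A | x ∈ m}.ncard = t :=
    (hN m hNm).resolve_left (Set.ncard_ne_zero_of_mem (a := p) ⟨hpA, hpm⟩)
  have hoff_card : {x ∈ A | x ∉ m}.ncard = ProjectivePlane.order P L := by
    have hsplit := Set.ncard_inter_add_ncard_sdiff_eq_ncard A {x | x ∈ m}
    change {x ∈ A | x ∈ m}.ncard + {x ∈ A | x ∉ m}.ncard = _ at hsplit
    omega
  have hne {x : P} (hx : x ∉ m) : p ≠ x := fun h => hx (h ▸ hpm)
  have hjoin {x : P} (hx : x ∉ m) := HasLines.mkLine_ax (L := L) (hne hx)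
  obtain ⟨x, ⟨hxA, hxm⟩, rfl⟩ := Set.surj_on_of_inj_on_of_ncard_le
    (s := {x ∈ A | x ∉ m}) (t := {k : L | p ∈ k ∧ k ≠ m})
    (fun x hx => HasLines.mkLine (hne hx.2))
    (fun x hx => ⟨(hjoin hx.2).1, fun h => hx.2 (h ▸ (hjoin hx.2).2)⟩)
    (by
      intro x y hx hy hxy
      by_contra hxy_ne
      have hNk : N ∉ (HasLines.mkLine (hne hx.2) : L) := fun h =>
        hx.2 (hm _ ⟨(hjoin hx.2).1, h⟩ ▸ (hjoin hx.2).2)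
      refine (hle _ hNk).not_gt ((Set.two_lt_ncard (Set.toFinite _)).mpr ⟨p, ⟨hpA, (hjoin hx.2).1⟩,
        x, ⟨hx.1, (hjoin hx.2).2⟩, y, ⟨hy.1, hxy ▸ (hjoin hy.2).2⟩,
        hne hx.2, hne hy.2, hxy_ne⟩))
    (by rw [ncard_lines_through_ne hpm, hoff_card]) (Set.toFinite _) l ⟨hpl, fun h => hl (h ▸ hNm)⟩
  exact (hle _ hl).antisymm <| (Set.one_lt_ncard (Set.toFinite _)).mpr
    ⟨p, ⟨hpA, hpl⟩, x, ⟨hxA, (hjoin hxm).2⟩, hne hxm⟩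

lemma order_projectivization_eq_card [Finite K] :
    ProjectivePlane.order (Pt K) (Pt K) = Nat.card K := by
  have := Fintype.ofFinite (Pt K)
  have hcount := ProjectivePlane.card_points (Pt K) (Pt K)
  rw [← Nat.card_eq_fintype_card,
    Projectivization.card_of_finrank K (Fin 3 → K) (Module.finrank_fin_fun K),
    Finset.sum_range_succ, Finset.sum_range_succ, Finset.sum_range_one] at hcount
  nlinarith [hcount]

lemma onLine_mk_iff {v : Fin 3 → K} (hv : v ≠ 0) (L : Submodule K (Fin 3 → K)) :
    OnLine (Projectivization.mk K v hv) L ↔ v ∈ L := by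
  rw [OnLine, Projectivization.submodule_mk, Submodule.span_singleton_le_iff_mem]

lemma IsLine.exists_onLine_iff_mem {L : Submodule K (Fin 3 → K)} (hL : IsLine L) :
    ∃ l : Pt K, ∀ P : Pt K, OnLine P L ↔ P ∈ l := by
  have hL_top : L < ⊤ := lt_top_iff_ne_top.mpr <| by
    rintro rfl
    simp [IsLine] at hL
  obtain ⟨g, hg, hle⟩ := L.exists_le_ker_of_lt_top hL_top
  obtain ⟨u, rfl⟩ := (dotProductEquiv K (Fin 3)).surjective g
  have hu : u ≠ 0 := by
    rintro rfl
    simp at hg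
  have hker : L = (dotProductEquiv K (Fin 3) u).ker := by
    refine Submodule.eq_of_le_of_finrank_eq hle ?_
    have := Module.Dual.finrank_ker_add_one_of_ne_zero hg
    rw [Module.finrank_fin_fun] at this
    rw [IsLine] at hL
    omega
  refine ⟨Projectivization.mk K u hu, fun P => ?_⟩
  induction P using Projectivization.ind with | h v hv =>
  rw [onLine_mk_iff, hker, LinearMap.mem_ker, ofField.mem_iff, Projectivization.orthogonal_mk,
    dotProduct_comm]
  rfl

theorem isKMArc_of_forall_notMem_ncard_le_two [Finite K] {A : Set (Pt K)} {N : Pt K} {t : ℕ}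
    (hA : A.ncard = Nat.card K + t)
    (hN : ∀ l : Pt K, N ∈ l → {P ∈ A | P ∈ l}.ncard = 0 ∨ {P ∈ A | P ∈ l}.ncard = t)
    (hle : ∀ l : Pt K, N ∉ l → {P ∈ A | P ∈ l}.ncard ≤ 2) :
    IsKMArc (Nat.card K) t A := by
  refine ⟨hA, fun L hL => ?_⟩
  obtain ⟨l, hl⟩ := hL.exists_onLine_iff_mem
  simp only [secantCount, hl]
  by_cases hNl : N ∈ l
  · exact (hN l hNl).imp_right Or.inr
  · obtain hempty | ⟨P, hPA, hPl⟩ := {P ∈ A | P ∈ l}.eq_empty_or_nonempty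
    · exact Or.inl (by rw [hempty, Set.ncard_empty])
    · rw [← order_projectivization_eq_card] at hA
      exact Or.inr <| Or.inl <|
        ncard_eq_two_of_forall_notMem_ncard_le_two hA hN hle hNl hPA hPl

end ProjectivePlane

section Points

open Configuration

lemma pt3_mem_mk_iff {x y z : K} (h : ¬(x = 0 ∧ y = 0 ∧ z = 0)) {u : Fin 3 → K} (hu : u ≠ 0) :
    pt3 x y z h ∈ Projectivization.mk K u hu ↔ u 0 * x + u 1 * y + u 2 * z = 0 := by
  simp [pt3, ofField.mem_iff, Projectivization.orthogonal_mk, -Matrix.cons_dotProduct,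
    Matrix.vec3_dotProduct, mul_comm]

lemma pt3_zero_one_inj {x x' : K} :
    pt3 0 1 x (by simp) = pt3 0 1 x' (by simp) ↔ x = x' := by
  refine ⟨fun h => ?_, fun h => by simp only [h]⟩
  obtain ⟨c, hc⟩ := (Projectivization.mk_eq_mk_iff' ..).mp h
  have hc_one : c = 1 := by simpa using congrFun hc 1
  simpa [hc_one] using (congrFun hc 2).symm

lemma pt3_one_inj {y z y' z' : K} :
    pt3 1 y z (by simp) = pt3 1 y' z' (by simp) ↔ y = y' ∧ z = z' := by
  refine ⟨fun h => ?_, fun h => by simp only [h]⟩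
  obtain ⟨c, hc⟩ := (Projectivization.mk_eq_mk_iff' ..).mp h
  have hc_one : c = 1 := by simpa using congrFun hc 0
  subst hc_one
  exact ⟨by simpa using (congrFun hc 1).symm, by simpa using (congrFun hc 2).symm⟩

lemma pt3_zero_one_ne_pt3_one (x y z : K) :
    pt3 0 1 x (by simp) ≠ pt3 1 y z (by simp) := by
  intro h
  obtain ⟨c, hc⟩ := (Projectivization.mk_eq_mk_iff' ..).mp h
  have hc_zero : c = 0 := by simpa using congrFun hc 0
  simpa [hc_zero] using congrFun hc 1

lemma ncard_image_pt3_union [Finite K] (S Z : Set K) (y : K → K) :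
    ((fun x => pt3 0 1 x (by simp)) '' S ∪ (fun z => pt3 1 (y z) z (by simp)) '' Z).ncard =
      S.ncard + Z.ncard := by
  rw [Set.ncard_union_eq, Set.ncard_image_of_injective, Set.ncard_image_of_injective]
  · exact fun z z' h => (pt3_one_inj.mp h).2
  · exact fun x x' h => pt3_zero_one_inj.mp h
  · rw [Set.disjoint_left]
    rintro _ ⟨x, -, rfl⟩ ⟨z, -, h⟩
    exact pt3_zero_one_ne_pt3_one x (y z) z h.symm

end Points

section Trace

variable {ι : Type*}

lemma ncard_fiber_of_surjective {M N : Type*} [AddGroup M] [AddGroup N] [Finite N] (f : M →+ N)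
    (hf : Function.Surjective f) (y : N) : {x | f x = y}.ncard = Nat.card M / Nat.card N := by
  obtain ⟨x, rfl⟩ := hf y
  have hfiber : {x' | f x' = f x}.ncard = Nat.card f.ker := Nat.card_congr (f.fiberEquivKer x)
  have hker := f.ker.card_mul_index
  rw [AddSubgroup.index_ker, AddMonoidHom.range_eq_top.mpr hf, AddSubgroup.card_top] at hker
  rw [hfiber, ← hker, Nat.mul_div_cancel _ Nat.card_pos]

/-- The traces of the products of an element with the members of the family `a`: the coordinates
of the functional which `x` induces on the span of `a` through the trace form. -/
def traceVec (F : Type*) [Field F] [Algebra F K] (a : ι → K) : K →ₗ[F] (ι → F) :=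
  LinearMap.pi fun i => (Algebra.trace F K).comp (LinearMap.mulLeft F (a i))

lemma trace_mul_linearCombination {F : Type*} [Field F] [Algebra F K] [Fintype ι] (a : ι → K)
    (c : ι → F) (x : K) :
    Algebra.trace F K (x * Fintype.linearCombination F a c) = c ⬝ᵥ traceVec F a x := by
  simp [Fintype.linearCombination_apply, Finset.mul_sum, dotProduct, traceVec, mul_comm]

lemma traceVec_surjective {F : Type*} [Field F] [Algebra F K] [FiniteDimensional F K]
    [Algebra.IsSeparable F K] [Finite ι] {a : ι → K} (ha : LinearIndependent F a) :
    Function.Surjective (traceVec F a) := by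
  have := Fintype.ofFinite ι
  rw [← LinearMap.range_eq_top]
  by_contra hne
  obtain ⟨g, hg, hle⟩ := Submodule.exists_le_ker_of_lt_top _ (lt_top_iff_ne_top.mpr hne)
  obtain ⟨c, rfl⟩ := (dotProductEquiv F ι).surjective g
  have hc : Fintype.linearCombination F a c = 0 :=
    (traceForm_nondegenerate F K).2 _ fun x => by
      rw [Algebra.traceForm_apply, trace_mul_linearCombination]
      exact hle ⟨x, rfl⟩
  have : c = 0 := ha.fintypeLinearCombination_injective (hc.trans (map_zero _).symm)
  exact hg (by rw [this, map_zero])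

lemma trace_pow_card {F : Type*} [Field F] [Fintype F] [Algebra F K] [Algebra.IsAlgebraic F K]
    (x : K) : Algebra.trace F K (x ^ Fintype.card F) = Algebra.trace F K x :=
  Algebra.trace_eq_of_algEquiv (FiniteField.frobeniusAlgEquivOfAlgebraic F K) x

end Trace

section TraceArc

/-- A map `F` on vectors is *dot-unital* when distinct vectors `x`, `y` always satisfy
`(F x - F y) ⬝ᵥ (x - y) = 1`. Such maps over `F₂` are the combinatorial input of `traceArc`. -/
def IsDotUnital {ι R : Type*} [Fintype ι] [NonAssocRing R] (F : (ι → R) → ι → R) : Prop :=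
  ∀ ⦃x y⦄, x ≠ y → (F x - F y) ⬝ᵥ (x - y) = 1

lemma IsDotUnital.injective {ι R : Type*} [Fintype ι] [NonAssocRing R] [Nontrivial R]
    {F : (ι → R) → ι → R} (hF : IsDotUnital F) : Function.Injective F := by
  intro x y hxy
  by_contra hne
  simpa [hxy] using hF hne

variable {ι : Type*} [Fintype ι] [Algebra (ZMod 2) K] {a : ι → K}
  {F : (ι → ZMod 2) → ι → ZMod 2}

/-- The second coordinate of the affine point `(1 : y : z)` of `traceArc a F` with last
coordinate `z`. -/
def traceArcY (a : ι → K) (F : (ι → ZMod 2) → ι → ZMod 2) (z : K) : K :=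
  Fintype.linearCombination (ZMod 2) a (F (traceVec (ZMod 2) a z))

/-- The candidate for a KM-arc of type `q / 2 ^ n` attached to a family `a` of `n` elements of a
field of even order `q`. The paper's condition `Tr (a i ^ 2 * x) = 0` on the points `(0 : 1 : x)` is
encoded as `x = s ^ 2` with `Tr (a i * s) = 0`, and the affine points are parametrised by their last
coordinate, so that `F` is the inverse of the paper's permutation of `F₂ⁿ`. -/
def traceArc (a : ι → K) (F : (ι → ZMod 2) → ι → ZMod 2) : Set (Pt K) :=
  (fun s => pt3 0 1 (s ^ 2) (by simp)) '' {s | traceVec (ZMod 2) a s = 0} ∪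
    Set.range fun z => pt3 1 (traceArcY a F z) z (by simp)

lemma trace_mul_traceArcY_sub (s z z' : K) :
    Algebra.trace (ZMod 2) K (s * (traceArcY a F z - traceArcY a F z')) =
      (F (traceVec (ZMod 2) a z) - F (traceVec (ZMod 2) a z')) ⬝ᵥ traceVec (ZMod 2) a s := by
  rw [traceArcY, traceArcY, ← map_sub, trace_mul_linearCombination]

lemma traceArcY_eq_iff (ha : LinearIndependent (ZMod 2) a) (hF : F.Injective) {z z' : K} :
    traceArcY a F z = traceArcY a F z' ↔ traceVec (ZMod 2) a z = traceVec (ZMod 2) a z' :=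
  (ha.fintypeLinearCombination_injective.comp hF).eq_iff

lemma ncard_sq_image (S : Set K) : ((fun s : K => s ^ 2) '' S).ncard = S.ncard := by
  have : CharP K 2 := charP_of_injective_algebraMap' (ZMod 2) 2
  exact Set.ncard_image_of_injective _ (frobenius_inj K 2)

variable [Finite K]

lemma ncard_traceArc (a : ι → K) (F : (ι → ZMod 2) → ι → ZMod 2) :
    (traceArc a F).ncard = {s | traceVec (ZMod 2) a s = 0}.ncard + Nat.card K := by
  rw [← ncard_sq_image {s | traceVec (ZMod 2) a s = 0}, ← Set.ncard_univ K,
    ← ncard_image_pt3_union _ _ (traceArcY a F), Set.image_univ, Set.image_image]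
  rfl

lemma ncard_traceArc_inter_mk (a : ι → K) (F : (ι → ZMod 2) → ι → ZMod 2) {u : Fin 3 → K}
    (hu : u ≠ 0) :
    {P ∈ traceArc a F | P ∈ Projectivization.mk K u hu}.ncard =
      {s | traceVec (ZMod 2) a s = 0 ∧ u 1 + u 2 * s ^ 2 = 0}.ncard +
        {z | u 0 + u 1 * traceArcY a F z + u 2 * z = 0}.ncard := by
  rw [← ncard_sq_image {s : K | _ ∧ _}, ← ncard_image_pt3_union _ _ (traceArcY a F)]
  congr 1
  ext P
  constructor
  · rintro ⟨⟨s, hs, rfl⟩ | ⟨z, rfl⟩, hP⟩ <;> rw [pt3_mem_mk_iff] at hP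
    · exact .inl ⟨s ^ 2, ⟨s, ⟨hs, by simpa using hP⟩, rfl⟩, rfl⟩
    · exact .inr ⟨z, by simpa using hP, rfl⟩
  · rintro (⟨_, ⟨s, ⟨hs, hP⟩, rfl⟩, rfl⟩ | ⟨z, hP, rfl⟩)
    · exact ⟨.inl ⟨s, hs, rfl⟩, (pt3_mem_mk_iff _ hu).mpr (by simpa using hP)⟩
    · exact ⟨.inr ⟨z, rfl⟩, (pt3_mem_mk_iff _ hu).mpr (by simpa using hP)⟩

lemma trace_mul_traceArcY_sub_eq_one (hF : IsDotUnital F) {s z z' : K} (hne : z ≠ z')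
    (hslope : z - z' = s ^ 2 * (traceArcY a F z - traceArcY a F z')) :
    Algebra.trace (ZMod 2) K (s * (traceArcY a F z - traceArcY a F z')) = 1 := by
  have htrace_ne : traceVec (ZMod 2) a z ≠ traceVec (ZMod 2) a z' := by
    intro h
    simp only [traceArcY, h, sub_self, mul_zero] at hslope
    exact hne (sub_eq_zero.mp hslope)
  calc Algebra.trace (ZMod 2) K (s * (traceArcY a F z - traceArcY a F z'))
      = Algebra.trace (ZMod 2) K ((s * (traceArcY a F z - traceArcY a F z')) ^ 2) :=
        (trace_pow_card (F := ZMod 2) _).symm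
    _ = Algebra.trace (ZMod 2) K ((z - z') * (traceArcY a F z - traceArcY a F z')) := by
        rw [hslope]
        ring_nf
    _ = (F (traceVec (ZMod 2) a z) - F (traceVec (ZMod 2) a z')) ⬝ᵥ
          (traceVec (ZMod 2) a z - traceVec (ZMod 2) a z') := by
        rw [trace_mul_traceArcY_sub, map_sub]
    _ = 1 := hF htrace_ne

lemma subsingleton_of_slope (hF : IsDotUnital F) {s : K} (hs : traceVec (ZMod 2) a s = 0)
    {Z : Set K} (hZ : ∀ z ∈ Z, ∀ z' ∈ Z,
      z - z' = s ^ 2 * (traceArcY a F z - traceArcY a F z')) : Z.Subsingleton := by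
  intro z hz z' hz'
  by_contra hne
  have := trace_mul_traceArcY_sub_eq_one hF hne (hZ z hz z' hz')
  rw [trace_mul_traceArcY_sub, hs, dotProduct_zero] at this
  exact zero_ne_one this

lemma ncard_le_two_of_slope (hF : IsDotUnital F) {s : K} {Z : Set K}
    (hZ : ∀ z ∈ Z, ∀ z' ∈ Z, z - z' = s ^ 2 * (traceArcY a F z - traceArcY a F z')) :
    Z.ncard ≤ 2 := by
  by_contra! hcard
  obtain ⟨x, hx, y, hy, z, hz, hxy, hxz, hyz⟩ := (Set.two_lt_ncard (Set.toFinite _)).mp hcard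
  have h_add : (1 : ZMod 2) + 1 = 1 := by
    nth_rw 1 [← trace_mul_traceArcY_sub_eq_one hF hxy (hZ x hx y hy),
      ← trace_mul_traceArcY_sub_eq_one hF hyz (hZ y hy z hz),
      ← trace_mul_traceArcY_sub_eq_one hF hxz (hZ x hx z hz)]
    rw [← map_add]
    ring_nf
  exact absurd h_add (by decide)

lemma ncard_traceArc_inter_mk_le_two (hF : IsDotUnital F) {u : Fin 3 → K} (hu : u ≠ 0)
    (hu_two : u 2 ≠ 0) : {P ∈ traceArc a F | P ∈ Projectivization.mk K u hu}.ncard ≤ 2 := by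
  have : CharP K 2 := charP_of_injective_algebraMap' (ZMod 2) 2
  obtain ⟨s, hs⟩ : ∃ s, u 1 + u 2 * s ^ 2 = 0 := by
    obtain ⟨s, hs⟩ := isSquare_of_charTwo' (-u 1 / u 2)
    exact ⟨s, by rw [pow_two, ← hs]; field_simp; ring⟩
  have hs_unique {s' : K} (hs' : u 1 + u 2 * s' ^ 2 = 0) : s' = s :=
    frobenius_inj K 2 <| mul_left_cancel₀ hu_two <| by
      simp only [frobenius_def]
      linear_combination hs' - hs
  have hslope : ∀ z ∈ {z | u 0 + u 1 * traceArcY a F z + u 2 * z = 0},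
      ∀ z' ∈ {z | u 0 + u 1 * traceArcY a F z + u 2 * z = 0},
        z - z' = s ^ 2 * (traceArcY a F z - traceArcY a F z') := by
    intro z hz z' hz'
    rw [Set.mem_ofPred_eq] at hz hz'
    refine mul_left_cancel₀ hu_two ?_
    linear_combination hz - hz' - (traceArcY a F z - traceArcY a F z') * hs
  rw [ncard_traceArc_inter_mk]
  by_cases hTs : traceVec (ZMod 2) a s = 0
  · exact add_le_add
      (Set.ncard_le_one_iff_subsingleton.mpr fun _ hx _ hy =>
        (hs_unique hx.2).trans (hs_unique hy.2).symm)
      (Set.ncard_le_one_iff_subsingleton.mpr <| subsingleton_of_slope hF hTs hslope)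
  · have hempty : {s | traceVec (ZMod 2) a s = 0 ∧ u 1 + u 2 * s ^ 2 = 0} = ∅ :=
      Set.eq_empty_of_forall_notMem fun _ hx => hTs (hs_unique hx.2 ▸ hx.1)
    rw [hempty, Set.ncard_empty, zero_add]
    exact ncard_le_two_of_slope hF hslope

lemma ncard_traceVec_fiber (ha : LinearIndependent (ZMod 2) a) (x : ι → ZMod 2) :
    {z | traceVec (ZMod 2) a z = x}.ncard = Nat.card K / 2 ^ Fintype.card ι := by
  simpa using ncard_fiber_of_surjective (traceVec (ZMod 2) a).toAddMonoidHom
    (traceVec_surjective ha) x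

lemma ncard_traceArc_inter_mk_of_apply_two_eq_zero (ha : LinearIndependent (ZMod 2) a)
    (hF : F.Injective) {u : Fin 3 → K} (hu : u ≠ 0) (hu_two : u 2 = 0) :
    {P ∈ traceArc a F | P ∈ Projectivization.mk K u hu}.ncard = 0 ∨
      {P ∈ traceArc a F | P ∈ Projectivization.mk K u hu}.ncard =
        Nat.card K / 2 ^ Fintype.card ι := by
  simp only [ncard_traceArc_inter_mk, hu_two, zero_mul, add_zero]
  by_cases hu_one : u 1 = 0
  · have hu_zero : u 0 ≠ 0 := fun h => hu <| by ext i; fin_cases i <;> assumption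
    right
    simp [hu_one, hu_zero, ncard_traceVec_fiber ha]
  obtain hempty | ⟨z₀, hz₀⟩ := {z | u 0 + u 1 * traceArcY a F z = 0}.eq_empty_or_nonempty
  · left
    simp [hempty, hu_one]
  · right
    have hfiber : {z | u 0 + u 1 * traceArcY a F z = 0} =
        {z | traceVec (ZMod 2) a z = traceVec (ZMod 2) a z₀} := by
      ext z
      rw [Set.mem_ofPred_eq] at hz₀
      rw [Set.mem_ofPred_eq, Set.mem_ofPred_eq, ← traceArcY_eq_iff ha hF, ← hz₀, add_right_inj,
        mul_right_inj' hu_one]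
    simp [hfiber, hu_one, ncard_traceVec_fiber ha]

theorem isKMArc_traceArc (ha : LinearIndependent (ZMod 2) a) (hF : IsDotUnital F) :
    IsKMArc (Nat.card K) (Nat.card K / 2 ^ Fintype.card ι) (traceArc a F) := by
  refine isKMArc_of_forall_notMem_ncard_le_two (N := pt3 0 0 1 (by simp)) ?_ ?_ ?_
  · rw [ncard_traceArc, ncard_traceVec_fiber ha, add_comm]
  · intro l hl
    induction l using Projectivization.ind with | h u hu =>
    exact ncard_traceArc_inter_mk_of_apply_two_eq_zero ha hF.injective hu
      (by simpa [pt3_mem_mk_iff] using hl)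
  · intro l hl
    induction l using Projectivization.ind with | h u hu =>
    exact ncard_traceArc_inter_mk_le_two hF hu (by simpa [pt3_mem_mk_iff] using hl)

end TraceArc

section QuadraticPermutation

/-- The quadratic permutation of `F₂³` in the paper's `q/8`-construction. The inverse of an
`IsDotUnital` permutation is again one, so it may be used in `traceArc` in place of its inverse. -/
def quadraticPerm (x : Fin 3 → ZMod 2) : Fin 3 → ZMod 2 :=
  ![x 0 + x 1 + x 2 + x 1 * x 2, x 1 + x 2 + x 0 * x 2, x 2 + x 0 * x 1]

lemma quadraticPerm_sub_dotProduct_sub (x y : Fin 3 → ZMod 2) :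
    (quadraticPerm x - quadraticPerm y) ⬝ᵥ (x - y) = 1 - ∏ i, (1 - (x i - y i)) := by
  simp only [quadraticPerm, Fin.prod_univ_three, Matrix.vec3_dotProduct, Pi.sub_apply,
    Matrix.cons_val]
  have hx (i : Fin 3) : x i ^ 2 = x i := ZMod.pow_card (x i)
  have hy (i : Fin 3) : y i ^ 2 = y i := ZMod.pow_card (y i)
  grind

lemma isDotUnital_quadraticPerm : IsDotUnital quadraticPerm := by
  intro x y hxy
  obtain ⟨i, hi⟩ := Function.ne_iff.mp hxy
  have hi_one : x i - y i = 1 := Fin.eq_one_of_ne_zero _ (sub_ne_zero.mpr hi)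
  rw [quadraticPerm_sub_dotProduct_sub,
    Finset.prod_eq_zero (Finset.mem_univ i) (by rw [hi_one, sub_self]), sub_zero]

end QuadraticPermutation

/-- Corollary 4.5: for every `q = 2^h` with `h ≥ 4` there exists a KM-arc
of type `q/8` in `PG(2,q)`. -/
theorem q8_exists
    {K : Type*} [Field K] [Fintype K] (h : ℕ) (hh : 4 ≤ h)
    (hcard : Fintype.card K = 2 ^ h) :
    ∃ A : Set (Pt K), IsKMArc (2 ^ h) (2 ^ h / 8) A := by
  have : CharP K 2 := charP_of_card_eq_prime_pow hcard
  let _ : Algebra (ZMod 2) K := ZMod.algebra K 2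
  have hrank : Module.finrank (ZMod 2) K = h := by
    have hpow := Module.card_eq_pow_finrank (K := ZMod 2) (V := K)
    rw [hcard, ZMod.card] at hpow
    exact (Nat.pow_right_injective le_rfl hpow).symm
  obtain ⟨a, ha⟩ := exists_linearIndependent_of_le_finrank (R := ZMod 2) (M := K)
    (n := 3) (by omega)
  have harc := isKMArc_traceArc ha isDotUnital_quadraticPerm
  rw [Nat.card_eq_fintype_card, hcard, Fintype.card_fin] at harc
  exact ⟨traceArc a quadraticPerm, harc⟩
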